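/- Let G = (V ∪ {s}, E) be a finite sandpile graph, Q ⊆ V, and fix for each x ∈ V a strict total order <_x on the set of edges of G incident to x. Then the map η ↦ t(η) defined by the burning bijection based on Q is a bijection from R_G onto the set of spanning trees of G; moreover each edge e_x of t(η) joins x to a vertex burnt strictly before x. -/

import Mathlib

open scoped Classical

namespace Sandpile

/-- A finite sandpile multigraph on vertex set `α` (which plays the role of `V ∪ {s}`),
given by a distinguished sink and symmetric edge multiplicities. -/
structure Graph (α : Type*) where
  sink : α
  b : α → α → ℕ

namespace Graph

variable {α : Type*} [Fintype α] [DecidableEq α] (G : Graph α)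

/-- The non-sink vertices (the set `V`). -/
def VSet : Finset α := Finset.univ.erase G.sink

/-- Degree restricted to a finite set of vertices: `deg_F(x) = ∑_{y ∈ F} b_{xy}`. -/
def degIn (F : Finset α) (x : α) : ℕ := ∑ y ∈ F, G.b x y

/-- Total degree `deg_G(x)`. -/
def deg (x : α) : ℕ := ∑ y, G.b x y

/-- `G` is a genuine finite sandpile graph: symmetric multiplicities, no loops, connected. -/
def IsSandpileGraph : Prop :=
  (∀ x y, G.b x y = G.b y x) ∧ (∀ x, G.b x x = 0) ∧
    ∀ x y : α, Relation.ReflTransGen (fun u v => 0 < G.b u v) x y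

/-- Connectivity of the subgraph induced on the vertex set `S`. -/
def ConnectedOn (S : Set α) : Prop :=
  ∀ x ∈ S, ∀ y ∈ S,
    Relation.ReflTransGen (fun u v => u ∈ S ∧ v ∈ S ∧ 0 < G.b u v) x y

/-- A sandpile is stable if every non-sink vertex carries fewer particles than its degree. -/
def Stable (η : α → ℕ) : Prop := ∀ x ∈ G.VSet, η x < G.deg x

/-- `η` is ample for `F` if some vertex of `F` has at least `deg_F` particles. -/
def AmpleFor (η : α → ℕ) (F : Finset α) : Prop := ∃ x ∈ F, G.degIn F x ≤ η x

/-- Dhar's burning test: recurrent = stable and ample for every nonempty `F ⊆ V`. -/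
def Recurrent (η : α → ℕ) : Prop :=
  G.Stable η ∧ ∀ F ⊆ G.VSet, F.Nonempty → G.AmpleFor η F

/-- Remove one particle at `w` (`η - δ_w`). -/
def SubOne (η : α → ℕ) (w : α) : α → ℕ := fun x => if x = w then η x - 1 else η x

/-- `η` and `ξ` agree on `W` (restriction `η_W = ξ_W`). -/
def EqOn (η ξ : α → ℕ) (W : Finset α) : Prop := ∀ x ∈ W, η x = ξ x

/-- `ξ` is (generalized) minimal on `W`: it extends to a recurrent sandpile, and no
recurrent extension stays recurrent after removing a particle from a vertex of `W`.
(`η - δ_w ∉ R_G` holds automatically if `η w = 0`, as then `η - δ_w` is not a configuration.) -/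
def Minimal (W : Finset α) (ξ : α → ℕ) : Prop :=
  (∃ η, G.Recurrent η ∧ EqOn η ξ W) ∧
    ∀ η, G.Recurrent η → EqOn η ξ W → ∀ w ∈ W, ¬(1 ≤ η w ∧ G.Recurrent (SubOne η w))

/-- `ν_G[P]`: the uniform probability of the event `P` under the uniform measure on
recurrent configurations (configurations are normalized to vanish at the sink). -/
noncomputable def prob (P : (α → ℕ) → Prop) : ℝ :=
  (Nat.card {η : α → ℕ // η G.sink = 0 ∧ G.Recurrent η ∧ P η} : ℝ) /
    (Nat.card {η : α → ℕ // η G.sink = 0 ∧ G.Recurrent η} : ℝ)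

/-- The graph Laplacian with the sink row and column deleted. -/
noncomputable def lapRed :
    Matrix {x : α // x ≠ G.sink} {x : α // x ≠ G.sink} ℝ :=
  Matrix.of fun x y =>
    if (x : α) = (y : α) then (G.deg ↑x : ℝ) else -(G.b ↑x ↑y : ℝ)

/-- `H = (Δ')⁻¹`, extended by `0` on the sink. -/
noncomputable def Hfun (x y : α) : ℝ :=
  if hx : x = G.sink then 0
  else if hy : y = G.sink then 0
  else (G.lapRed)⁻¹ ⟨x, hx⟩ ⟨y, hy⟩

/-- Oriented edges of the multigraph `G`: an edge from `p.1` to `p.2.1`, with copy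
index `p.2.2` (parallel edges are distinct). -/
abbrev OEdge (G : Graph α) : Type _ := {p : α × α × ℕ // p.2.2 < G.b p.1 p.2.1}

/-- `K_G(e,f) = δ_{ef} - Y_G(e,f)` where `Y_G` is the transfer current matrix. -/
noncomputable def Kmat (e f : G.OEdge) : ℝ :=
  (if e = f then 1 else 0) -
    (G.Hfun e.1.1 f.1.1 - G.Hfun e.1.1 f.1.2.1 - G.Hfun e.1.2.1 f.1.1 +
      G.Hfun e.1.2.1 f.1.2.1)

/-- Unburnt sets of phase one of the burning algorithm based on `Q`:
`U_0 = V`, `U_i = U_{i-1} \ B_i` with `B_i = {x ∈ U_{i-1} \ Q : η x ≥ deg_{U_{i-1}} x}`. -/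
def U1 (η : α → ℕ) (Q : Finset α) : ℕ → Finset α
  | 0 => G.VSet
  | i + 1 => (U1 η Q i).filter fun x => x ∈ Q ∨ η x < G.degIn (U1 η Q i) x

/-- The final unburnt set `U^{(1)}_I` of phase one (the sequence `U1` is decreasing,
hence stabilizes after at most `|α|` steps). -/
def U1lim (η : α → ℕ) (Q : Finset α) : Finset α := G.U1 η Q (Fintype.card α)

/-- Unburnt sets of phase two of the burning algorithm based on `Q`. -/
def U2 (η : α → ℕ) (Q : Finset α) : ℕ → Finset α
  | 0 => G.U1lim η Q
  | i + 1 => (U2 η Q i).filter fun x => η x < G.degIn (U2 η Q i) x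

/-- Recurrence in the wired graph `G_W` (note `deg_{G_W}(x) = deg_G(x)` for `x ∈ W`,
and `deg_F` for `F ⊆ W` is the same in `G_W` and `G`). -/
def WiredRecurrent (W : Finset α) (ξ : α → ℕ) : Prop :=
  (∀ x ∈ W, ξ x < G.deg x) ∧ ∀ F ⊆ W, F.Nonempty → ∃ x ∈ F, G.degIn F x ≤ ξ x

/-- `ξ` is minimal in the wired graph `G_W`. -/
def WiredMinimal (W : Finset α) (ξ : α → ℕ) : Prop :=
  G.WiredRecurrent W ξ ∧ ∀ w ∈ W, ¬(1 ≤ ξ w ∧ G.WiredRecurrent W (SubOne ξ w))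

/-- Entry points `E(ξ,W)` of `ξ ∈ R_{G_W}`: vertices burnable at the first step. -/
def entryPoints (W : Finset α) (ξ : α → ℕ) : Finset α :=
  W.filter fun w => G.degIn W w ≤ ξ w

/-- `x` is burnable given the burnt set `S`: `η(x) ≥ deg_G(x) − ∑_{y ∈ S} b_{xy}`. -/
def Burnable (η : α → ℕ) (S : Finset α) (x : α) : Prop :=
  G.degIn (Finset.univ \ S) x ≤ η x

/-- A burning sequence starting from the burnt set `S`. -/
def IsBurnSeq (η : α → ℕ) : Finset α → List α → Prop
  | _, [] => True
  | S, x :: l => x ∉ S ∧ G.Burnable η S x ∧ IsBurnSeq η (insert x S) l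

/-- `B` is a burnt set for `η`: some burning sequence from `{s}` burns exactly `B`. -/
def IsBurntSet (η : α → ℕ) (B : Finset α) : Prop :=
  ∃ l : List α, G.IsBurnSeq η {G.sink} l ∧ l.toFinset = B

/-- Reachability within the vertex set `S`. -/
def ReachIn (S : Set α) (x y : α) : Prop :=
  Relation.ReflTransGen (fun u v => u ∈ S ∧ v ∈ S ∧ 0 < G.b u v) x y

/-- `C` is a connected component of the subgraph induced on `(V ∪ {s}) \ W`
that does not contain the sink. -/
def IsHoleComp (W C : Finset α) : Prop :=
  C.Nonempty ∧ G.sink ∉ C ∧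
    ∀ x ∈ C, ∀ y : α, y ∈ C ↔ y ∉ W ∧ G.ReachIn {a : α | a ∉ W} x y

/-- Adjacency induced by a finite set `t` of (undirected, indexed) edges. -/
def edgeRel (t : Finset (Sym2 α × ℕ)) (u v : α) : Prop := ∃ k : ℕ, (s(u, v), k) ∈ t

/-- `t` is a spanning tree of the multigraph `G`: it consists of edges of `G`
(parallel edges distinct), it spans (connected), and every edge is a bridge
(equivalently, it is acyclic). -/
def IsSpanningTree (t : Finset (Sym2 α × ℕ)) : Prop :=
  (∀ p ∈ t, ∃ x y : α, p.1 = s(x, y) ∧ p.2 < G.b x y) ∧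
  (∀ u v : α, Relation.ReflTransGen (edgeRel t) u v) ∧
  ∀ p ∈ t, ∀ x y : α, p.1 = s(x, y) →
    ¬ Relation.ReflTransGen (edgeRel (t.erase p)) x y

/-- Adjacency induced by a set of (undirected, indexed) edges. -/
def edgeRelSet (t : Set (Sym2 α × ℕ)) (u v : α) : Prop := ∃ k : ℕ, (s(u, v), k) ∈ t

/-- Set version of `IsSpanningTree`. -/
def IsSpanningTreeSet (t : Set (Sym2 α × ℕ)) : Prop :=
  (∀ p ∈ t, ∃ x y : α, p.1 = s(x, y) ∧ p.2 < G.b x y) ∧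
  (∀ u v : α, Relation.ReflTransGen (edgeRelSet t) u v) ∧
  ∀ p ∈ t, ∀ x y : α, p.1 = s(x, y) →
    ¬ Relation.ReflTransGen (edgeRelSet (t \ {p})) x y

/-- The step at which `x` burns in phase one (0 for the sink; `sInf ∅ = 0` if `x`
never burns in phase one). -/
noncomputable def p1time (η : α → ℕ) (Q : Finset α) (x : α) : ℕ :=
  sInf {i : ℕ | x ∉ G.U1 η Q i}

/-- The step at which `x` burns in phase two. -/
noncomputable def p2time (η : α → ℕ) (Q : Finset α) (x : α) : ℕ :=
  sInf {i : ℕ | x ∉ G.U2 η Q i}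

/-- Vertices burnt at step `i` of phase one (`B^{(1)}_0 = {s}`). -/
def B1 (η : α → ℕ) (Q : Finset α) : ℕ → Finset α
  | 0 => {G.sink}
  | i + 1 => G.U1 η Q i \ G.U1 η Q (i + 1)

/-- Vertices burnt at step `i` of phase two (`B^{(2)}_0` = everything burnt in phase
one, including the sink). -/
def B2 (η : α → ℕ) (Q : Finset α) : ℕ → Finset α
  | 0 => Finset.univ \ G.U1lim η Q
  | i + 1 => G.U2 η Q i \ G.U2 η Q (i + 1)

/-- The set `B^{(p)}_{i-1}` of vertices burnt at the step preceding the step at which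
`x` burns (in the appropriate phase). -/
noncomputable def prevBurnt (η : α → ℕ) (Q : Finset α) (x : α) : Finset α :=
  if x ∈ G.U1lim η Q then G.B2 η Q (G.p2time η Q x - 1)
  else G.B1 η Q (G.p1time η Q x - 1)

/-- The set `D = B^{(p)}_0 ∪ ⋯ ∪ B^{(p)}_{i-1}` of vertices burnt strictly before `x`
in the phase in which `x` burns. -/
noncomputable def burntBefore (η : α → ℕ) (Q : Finset α) (x : α) : Finset α :=
  if x ∈ G.U1lim η Q then Finset.univ \ G.U2 η Q (G.p2time η Q x - 1)
  else Finset.univ \ G.U1 η Q (G.p1time η Q x - 1)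

/-- `j = η(x) − deg_G(x) + n_x` with `n_x = ∑_{y ∈ D} b_{xy}`. -/
noncomputable def jX (η : α → ℕ) (Q : Finset α) (x : α) : ℕ :=
  η x + G.degIn (G.burntBefore η Q x) x - G.deg x

/-- The defining property of the edge `e_x` of the burning bijection based on `Q`:
`e_x` has tail `x`, head burnt at the previous step, and exactly `j` smaller elements
of `P_x` under the given edge order `lt x`. -/
def EdgeSpec (lt : α → G.OEdge → G.OEdge → Prop) (η : α → ℕ) (Q : Finset α)
    (x : α) (e : G.OEdge) : Prop :=
  e.1.1 = x ∧ e.1.2.1 ∈ G.prevBurnt η Q x ∧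
    {f : G.OEdge | f.1.1 = x ∧ f.1.2.1 ∈ G.prevBurnt η Q x ∧ lt x f e}.ncard =
      G.jX η Q x

/-- The (oriented) spanning tree `t(η) = {e_x : x ∈ V}` assigned to `η` by the
burning bijection based on `Q`. -/
def treeOf (lt : α → G.OEdge → G.OEdge → Prop) (η : α → ℕ) (Q : Finset α) :
    Set G.OEdge :=
  {e | ∃ x ∈ G.VSet, G.EdgeSpec lt η Q x e}

/-- Forget the orientation of an oriented edge. -/
def undir (e : G.OEdge) : Sym2 α × ℕ := (s(e.1.1, e.1.2.1), e.1.2.2)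

/-- Total burning order: phase-one vertices first (at their phase-one step), then
phase-two vertices. -/
noncomputable def burnOrder (η : α → ℕ) (Q : Finset α) (x : α) : ℕ :=
  if x ∈ G.U1lim η Q then Fintype.card α + 1 + G.p2time η Q x else G.p1time η Q x

/-- Edge multiplicities of the auxiliary graph `G_W^*` (on vertex set `W ∪ {s}`):
`b*_{xy} = b_{xy}` for `x,y ∈ W`; `b*_{xs} = ∑_{z ∉ W} b_{xz}` for `x ∈ Q` and
`b*_{xs} = 0` for `x ∈ W \ Q`. -/
def bstar (Q W : Finset α) (x y : α) : ℕ :=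
  if x ∈ W ∧ y ∈ W then G.b x y
  else if x ∈ W ∧ y = G.sink then
    if x ∈ Q then ∑ z ∈ Finset.univ \ W, G.b x z else 0
  else if y ∈ W ∧ x = G.sink then
    if y ∈ Q then ∑ z ∈ Finset.univ \ W, G.b z y else 0
  else 0

/-- Recurrence in the auxiliary graph `G_W^*`. -/
def StarRecurrent (Q W : Finset α) (ζ : α → ℕ) : Prop :=
  (∀ x ∈ W, ζ x < ∑ y ∈ insert G.sink W, G.bstar Q W x y) ∧
    ∀ F ⊆ W, F.Nonempty → ∃ x ∈ F, (∑ y ∈ F, G.bstar Q W x y) ≤ ζ x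

end Graph

end Sandpile

open Sandpile

/-! Think of a vertex `y` burning at time `t` as sending a signal along each of its edges; the
signal reaches a neighbour `x` at time `t + 1`, except that a vertex of `Q` receives all the
signals of phase one at the first step of phase two. Then `x` burns as soon as at most `η x` of
its edges are still waiting for a signal. Sort the edges at `x` by the arrival times of their
signals, latest first, and those with equal arrival times by `<_x`: the edge `e_x` is the one
preceded by exactly `η x` others. So for given burning times, `η` and the edges `e_x` determine
each other. The burning times are in turn determined both by the tree, through a recursion
starting at the sink, and by `η`, because signals travel forward in time. Conversely the times
computed from an arbitrary tree burn the sandpile read off from it, which is therefore recurrent.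
-/

namespace Sandpile

section Relation

variable {α : Type*} {R : α → α → Prop} {s : α}

theorem exists_rank_of_forall_reflTransGen (h : ∀ x, Relation.ReflTransGen R s x) :
    ∃ r : α → ℕ, ∀ x, x ≠ s → ∃ y, R y x ∧ r y < r x := by
  let layer (n : ℕ) : Set α := (fun S : Set α => {x | ∃ y ∈ S, R y x})^[n] {s}
  have layer_succ (n : ℕ) : layer (n + 1) = {x | ∃ y ∈ layer n, R y x} :=
    Function.iterate_succ_apply' _ _ _
  have exists_layer (x : α) : ∃ n, x ∈ layer n := by
    induction h x with
    | refl => exact ⟨0, rfl⟩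
    | tail _ hyz ih =>
      obtain ⟨n, hn⟩ := ih
      exact ⟨n + 1, by rw [layer_succ]; exact ⟨_, hn, hyz⟩⟩
  refine ⟨fun x => sInf {n | x ∈ layer n}, fun x hx => ?_⟩
  have hmem : x ∈ layer (sInf {n | x ∈ layer n}) := Nat.sInf_mem (exists_layer x)
  cases hn : sInf {n | x ∈ layer n} with
  | zero => rw [hn] at hmem; exact absurd hmem hx
  | succ n =>
    rw [hn, layer_succ] at hmem
    obtain ⟨y, hy, hyx⟩ := hmem
    have hle : sInf {n | y ∈ layer n} ≤ n := Nat.sInf_le hy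
    refine ⟨y, hyx, ?_⟩
    simpa only [hn] using Nat.lt_succ_of_le hle

end Relation

section Order

variable {β : Type*} {r : β → β → Prop} {S T : Set β}

/-- `r` restricts to a strict total order on the set `S`. It expresses that `<_x`, given as a
relation on all oriented edges, is an order of the edges incident to `x`. -/
structure IsStrictTotalOrderOn (r : β → β → Prop) (S : Set β) : Prop where
  irrefl : ∀ a ∈ S, ¬ r a a
  trans : ∀ a ∈ S, ∀ b ∈ S, ∀ c ∈ S, r a b → r b c → r a c
  trichotomous : ∀ a ∈ S, ∀ b ∈ S, a = b ∨ r a b ∨ r b a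

theorem IsStrictTotalOrderOn.mono (h : IsStrictTotalOrderOn r T) (hST : S ⊆ T) :
    IsStrictTotalOrderOn r S where
  irrefl a ha := h.irrefl a (hST ha)
  trans a ha b hb c hc := h.trans a (hST ha) b (hST hb) c (hST hc)
  trichotomous a ha b hb := h.trichotomous a (hST ha) b (hST hb)

theorem IsStrictTotalOrderOn.ncard_lt_ncard (h : IsStrictTotalOrderOn r S) (hS : S.Finite)
    {a b : β} (ha : a ∈ S) (hb : b ∈ S) (hab : r a b) :
    {c ∈ S | r c a}.ncard < {c ∈ S | r c b}.ncard := by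
  refine Set.ncard_lt_ncard ⟨fun c hc => ⟨hc.1, h.trans c hc.1 a ha b hb hc.2 hab⟩, fun hsub => ?_⟩
    (hS.subset (Set.sep_subset _ _))
  exact h.irrefl a ha (hsub ⟨ha, hab⟩).2

theorem IsStrictTotalOrderOn.bijOn_ncard (h : IsStrictTotalOrderOn r S) (hS : S.Finite) :
    Set.BijOn (fun a => {b ∈ S | r b a}.ncard) S (Set.Iio S.ncard) := by
  have mapsTo : Set.MapsTo (fun a => {b ∈ S | r b a}.ncard) S (Set.Iio S.ncard) := fun a ha =>
    Set.ncard_lt_ncard ⟨Set.sep_subset _ _, fun hsub => h.irrefl a ha (hsub ha).2⟩ hS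
  have injOn : Set.InjOn (fun a => {b ∈ S | r b a}.ncard) S := fun a ha b hb hab => by
    rcases h.trichotomous a ha b hb with heq | hlt | hgt
    · exact heq
    · exact absurd hab (h.ncard_lt_ncard hS ha hb hlt).ne
    · exact absurd hab (h.ncard_lt_ncard hS hb ha hgt).ne'
  refine ⟨mapsTo, injOn, Eq.superset (Set.eq_of_subset_of_ncard_le mapsTo.image_subset ?_)⟩
  rw [Set.ncard_Iio_nat, injOn.ncard_image]

end Order

namespace Graph

section Arborescence

variable {α : Type*} {G : Graph α} {ν : α → ℕ → ℕ} {T T' : α → ℕ} {A A' : Set G.OEdge}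
  {t t' : Set (Sym2 α × ℕ)}

theorem reflTransGen_edgeRelSet_symm {x y : α}
    (h : Relation.ReflTransGen (edgeRelSet t) x y) :
    Relation.ReflTransGen (edgeRelSet t) y x := by
  have : Std.Symm (edgeRelSet t) := ⟨fun x y ⟨k, hk⟩ => ⟨k, by rwa [Sym2.eq_swap]⟩⟩
  exact Relation.ReflTransGen.stdSymm.symm _ _ h

theorem undir_eq_undir_iff {e f : G.OEdge} :
    G.undir e = G.undir f ↔ e = f ∨ e.1 = (f.1.2.1, f.1.1, f.1.2.2) := by
  obtain ⟨⟨x, y, k⟩, he⟩ := e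
  obtain ⟨⟨x', y', k'⟩, hf⟩ := f
  simp only [undir, Prod.mk.injEq, Sym2.eq_iff, Subtype.mk.injEq]
  tauto

/-- A spanning tree all of whose edges are oriented towards the sink: every other vertex is the
tail of exactly one edge, and following the edges there are no cycles. Acyclicity is encoded by a
rank that decreases along the edges. -/
structure IsArborescence (A : Set G.OEdge) : Prop where
  bijOn_tail : Set.BijOn (fun e : G.OEdge => e.1.1) A {x | x ≠ G.sink}
  exists_rank : ∃ r : α → ℕ, ∀ e ∈ A, r e.1.2.1 < r e.1.1

namespace IsArborescence

theorem tail_ne_sink (hA : IsArborescence A) {e : G.OEdge} (he : e ∈ A) : e.1.1 ≠ G.sink :=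
  hA.bijOn_tail.mapsTo he

theorem eq_of_tail_eq (hA : IsArborescence A) {e f : G.OEdge} (he : e ∈ A) (hf : f ∈ A)
    (hef : e.1.1 = f.1.1) : e = f :=
  hA.bijOn_tail.injOn he hf hef

theorem exists_tail_eq (hA : IsArborescence A) {x : α} (hx : x ≠ G.sink) :
    ∃ e ∈ A, e.1.1 = x :=
  hA.bijOn_tail.surjOn hx

theorem induction (hA : IsArborescence A) {P : α → Prop} (sink : P G.sink)
    (edge : ∀ e ∈ A, P e.1.2.1 → P e.1.1) (x : α) : P x := by
  obtain ⟨r, hr⟩ := hA.exists_rank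
  induction hn : r x using Nat.strong_induction_on generalizing x with
  | _ n ih =>
    by_cases hx : x = G.sink
    · exact hx ▸ sink
    · obtain ⟨e, he, rfl⟩ := hA.exists_tail_eq hx
      exact edge e he (ih _ (hn ▸ hr e he) _ rfl)

theorem exists_time (hA : IsArborescence A) (ν : α → ℕ → ℕ) :
    ∃ T : α → ℕ, T G.sink = 0 ∧ ∀ e ∈ A, T e.1.1 = ν e.1.1 (T e.1.2.1) := by
  obtain ⟨r, hr⟩ := hA.exists_rank
  choose parent parent_mem parent_tail using fun x => hA.exists_tail_eq (x := x)
  have parent_lt (x : α) (hx : x ≠ G.sink) : r (parent x hx).1.2.1 < r x :=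
    (hr _ (parent_mem x hx)).trans_eq (congrArg r (parent_tail x hx))
  let T : α → ℕ := (measure r).wf.fix fun x T =>
    if hx : x = G.sink then 0 else ν x (T (parent x hx).1.2.1 (parent_lt x hx))
  have T_eq (x : α) : T x = if hx : x = G.sink then 0 else ν x (T (parent x hx).1.2.1) :=
    (measure r).wf.fix_eq _ x
  refine ⟨T, (T_eq _).trans (dif_pos rfl), fun e he => ?_⟩
  have hx := hA.tail_ne_sink he
  rw [T_eq, dif_neg hx, hA.eq_of_tail_eq (parent_mem _ hx) he (parent_tail _ hx)]

theorem time_unique (hA : IsArborescence A) (hsink : T G.sink = T' G.sink)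
    (hT : ∀ e ∈ A, T e.1.1 = ν e.1.1 (T e.1.2.1))
    (hT' : ∀ e ∈ A, T' e.1.1 = ν e.1.1 (T' e.1.2.1)) : T = T' :=
  funext <| hA.induction hsink fun e he ih => by rw [hT e he, hT' e he, ih]

theorem eq_of_subset (hA : IsArborescence A) (hA' : IsArborescence A') (h : A ⊆ A') : A = A' := by
  refine h.antisymm fun e he => ?_
  obtain ⟨f, hf, hfe⟩ := hA.exists_tail_eq (hA'.tail_ne_sink he)
  exact hA'.eq_of_tail_eq (h hf) he hfe ▸ hf

theorem connected_undir_image (hA : IsArborescence A) (x y : α) :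
    Relation.ReflTransGen (edgeRelSet (G.undir '' A)) x y := by
  have to_sink (z : α) : Relation.ReflTransGen (edgeRelSet (G.undir '' A)) z G.sink :=
    hA.induction (P := fun z => Relation.ReflTransGen (edgeRelSet (G.undir '' A)) z G.sink)
      .refl (fun e he ih => .head ⟨e.1.2.2, e, he, rfl⟩ ih) z
  exact (to_sink x).trans (reflTransGen_edgeRelSet_symm (to_sink y))

theorem exists_cut (hA : IsArborescence A) {e : G.OEdge} (he : e ∈ A) :
    ∃ D : Set α, e.1.1 ∈ D ∧ e.1.2.1 ∉ D ∧ ∀ f ∈ A, f ≠ e → (f.1.1 ∈ D ↔ f.1.2.1 ∈ D) := by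
  obtain ⟨r, hr⟩ := hA.exists_rank
  let child (x y : α) : Prop := ∃ f ∈ A, f.1.1 = x ∧ f.1.2.1 = y
  have rank_le {x : α} (hx : Relation.ReflTransGen child x e.1.1) : r e.1.1 ≤ r x := by
    induction hx using Relation.ReflTransGen.head_induction_on with
    | refl => exact le_rfl
    | head hxy _ ih =>
      obtain ⟨f, hf, rfl, rfl⟩ := hxy
      exact ih.trans (hr f hf).le
  -- The descendants of the tail of `e`.
  refine ⟨{x | Relation.ReflTransGen child x e.1.1}, .refl,
    fun h => (rank_le h).not_gt (hr e he), fun f hf hfe => ⟨fun h => ?_, fun h => ?_⟩⟩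
  · obtain heq | ⟨y, ⟨f', hf', htail, rfl⟩, hy⟩ := Relation.ReflTransGen.cases_head h
    · exact absurd (hA.eq_of_tail_eq hf he heq) hfe
    · rwa [hA.eq_of_tail_eq hf hf' htail.symm]
  · exact .head ⟨f, hf, rfl, rfl⟩ h

theorem isSpanningTreeSet_undir_image (hA : IsArborescence A) :
    G.IsSpanningTreeSet (G.undir '' A) := by
  refine ⟨?_, hA.connected_undir_image, ?_⟩
  · rintro _ ⟨e, -, rfl⟩
    exact ⟨e.1.1, e.1.2.1, rfl, e.2⟩
  rintro _ ⟨e, he, rfl⟩ x y hxy hpath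
  obtain ⟨D, htail, hhead, hcut⟩ := hA.exists_cut he
  have step {u v : α} (huv : edgeRelSet (G.undir '' A \ {G.undir e}) u v) : u ∈ D ↔ v ∈ D := by
    obtain ⟨k, ⟨f, hf, hfk⟩, hne⟩ := huv
    have hfe : f ≠ e := fun h => hne (by rw [← hfk, h]; rfl)
    rcases Sym2.eq_iff.1 (congrArg Prod.fst hfk) with ⟨rfl, rfl⟩ | ⟨rfl, rfl⟩
    · exact hcut f hf hfe
    · exact (hcut f hf hfe).symm
  have hD : x ∈ D ↔ y ∈ D := by
    clear hxy
    induction hpath with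
    | refl => rfl
    | tail _ huv ih => exact ih.trans (step huv)
  rcases Sym2.eq_iff.1 hxy with ⟨rfl, rfl⟩ | ⟨rfl, rfl⟩
  · exact hhead (hD.1 htail)
  · exact hhead (hD.2 htail)

theorem subset_of_undir_image_eq (hA : IsArborescence A) (hA' : IsArborescence A')
    (h : G.undir '' A = G.undir '' A') : A ⊆ A' := by
  obtain ⟨r, hr⟩ := hA.exists_rank
  suffices ∀ x, ∀ e ∈ A, e.1.1 = x → e ∈ A' from fun e he => this _ e he rfl
  refine hA.induction (fun e he hsink => absurd hsink (hA.tail_ne_sink he)) ?_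
  rintro f₀ hf₀ ih e he heq
  obtain rfl := hA.eq_of_tail_eq he hf₀ heq
  obtain ⟨e', he', heq'⟩ : G.undir e ∈ G.undir '' A' := h ▸ Set.mem_image_of_mem _ he
  rcases undir_eq_undir_iff.1 heq' with rfl | hrev
  · exact he'
  · -- If `A'` reversed `e`, then so would `A`, against the rank.
    obtain ⟨htail, hhead⟩ : e'.1.1 = e.1.2.1 ∧ e'.1.2.1 = e.1.1 := by simp [hrev]
    obtain ⟨f, hf, hfe⟩ := hA.exists_tail_eq (htail ▸ hA'.tail_ne_sink he')
    have hfe' : f = e' := hA'.eq_of_tail_eq (ih f hf hfe) he' (hfe.trans htail.symm)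
    have hf_lt := hr f hf
    rw [hfe, hfe', hhead] at hf_lt
    exact absurd (hr e he) hf_lt.not_gt

end IsArborescence

theorem IsSpanningTreeSet.eq_of_subset_of_connected (ht : G.IsSpanningTreeSet t) (hsub : t' ⊆ t)
    (hconn : ∀ x y, Relation.ReflTransGen (edgeRelSet t') x y) : t' = t := by
  refine hsub.antisymm fun p hp => ?_
  by_contra hp'
  obtain ⟨x, y, hxy, -⟩ := ht.1 p hp
  refine ht.2.2 p hp x y hxy (Relation.ReflTransGen.mono ?_ _ _ (hconn x y))
  rintro u v ⟨k, hk⟩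
  exact ⟨k, hsub hk, fun h => hp' (h ▸ hk)⟩

theorem IsSpanningTreeSet.exists_isArborescence (hb : ∀ x y, G.b x y = G.b y x)
    (ht : G.IsSpanningTreeSet t) : ∃ A : Set G.OEdge, IsArborescence A ∧ G.undir '' A = t := by
  obtain ⟨r, hr⟩ := exists_rank_of_forall_reflTransGen (ht.2.1 G.sink)
  have exists_parent (x : α) (hx : x ≠ G.sink) :
      ∃ e : G.OEdge, G.undir e ∈ t ∧ e.1.1 = x ∧ r e.1.2.1 < r x := by
    obtain ⟨y, ⟨k, hk⟩, hlt⟩ := hr x hx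
    obtain ⟨u, v, huv, hkb⟩ := ht.1 _ hk
    have hkb' : k < G.b x y := by
      rcases Sym2.eq_iff.1 huv with ⟨rfl, rfl⟩ | ⟨rfl, rfl⟩
      · rwa [hb]
      · exact hkb
    exact ⟨⟨(x, y, k), hkb'⟩, by rwa [undir, Sym2.eq_swap], rfl, hlt⟩
  choose e he_mem he_tail he_rank using exists_parent
  have hA : IsArborescence {f | ∃ x hx, e x hx = f} := by
    refine ⟨⟨?_, ?_, fun x hx => ⟨e x hx, ⟨x, hx, rfl⟩, he_tail x hx⟩⟩, r, ?_⟩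
    · rintro _ ⟨x, hx, rfl⟩
      exact (he_tail x hx).trans_ne hx
    · rintro _ ⟨x, hx, rfl⟩ _ ⟨y, hy, rfl⟩ hxy
      obtain rfl : x = y := by rw [← he_tail x hx, ← he_tail y hy]; exact hxy
      rfl
    · rintro _ ⟨x, hx, rfl⟩
      exact (he_rank x hx).trans_eq (congrArg r (he_tail x hx).symm)
  refine ⟨_, hA, ht.eq_of_subset_of_connected ?_ hA.connected_undir_image⟩
  rintro _ ⟨_, ⟨x, hx, rfl⟩, rfl⟩
  exact he_mem x hx

theorem bijOn_undir_image (hb : ∀ x y, G.b x y = G.b y x) :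
    Set.BijOn (fun A : Set G.OEdge => G.undir '' A) {A | IsArborescence A}
      {t | G.IsSpanningTreeSet t} :=
  ⟨fun _ hA => hA.isSpanningTreeSet_undir_image,
    fun _ hA _ hA' h => (hA.subset_of_undir_image_eq hA' h).antisymm
      (hA'.subset_of_undir_image_eq hA h.symm),
    fun _ ht => ht.exists_isArborescence hb⟩

end Arborescence

section BurningTime

variable {α : Type*} {G : Graph α} {η : α → ℕ} {x : α}

theorem degIn_mono {F F' : Finset α} (h : F ⊆ F') (x : α) : G.degIn F x ≤ G.degIn F' x :=
  Finset.sum_le_sum_of_subset h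

theorem degIn_sdiff_add_degIn [DecidableEq α] {F F' : Finset α} (h : F ⊆ F') :
    G.degIn (F' \ F) x + G.degIn F x = G.degIn F' x :=
  Finset.sum_sdiff h

variable [Fintype α] {ν : α → ℕ → ℕ} {T T' : α → ℕ}

/-- When `y` burns at time `T y`, a signal is sent along each edge from `y` to `x`, arriving at
time `ν x (T y)`. This is the set of those `y` whose signals arrive after `x` has burnt. -/
def signalsAfter (ν : α → ℕ → ℕ) (T : α → ℕ) (x : α) : Finset α := {y | T x < ν x (T y)}

/-- The vertices whose signals arrive at `x` exactly when `x` burns; see `signalsAfter`. -/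
def signalsAt (ν : α → ℕ → ℕ) (T : α → ℕ) (x : α) : Finset α := {y | ν x (T y) = T x}

theorem degIn_signalsAfter_add_degIn_signalsAt :
    G.degIn (signalsAfter ν T x) x + G.degIn (signalsAt ν T x) x =
      G.degIn {y | T x ≤ ν x (T y)} x := by
  have disjoint : Disjoint (signalsAfter ν T x) (signalsAt ν T x) :=
    Finset.disjoint_filter.2 fun _ _ hlt heq => hlt.ne' heq
  rw [degIn, degIn, ← Finset.sum_union disjoint, degIn]
  congr 1
  ext y
  simp only [signalsAfter, signalsAt, Finset.mem_union, Finset.mem_filter_univ]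
  omega

/-- `T` is a possible schedule for burning `η` when signals are delayed according to `ν`: the sink
burns at time `0`, and every other `x` burns at the first moment at which at most `η x` of its
edges have not yet carried a signal. -/
structure IsBurningTime (G : Graph α) (ν : α → ℕ → ℕ) (η T : α → ℕ) : Prop where
  sink : T G.sink = 0
  mem_Ico : ∀ x ≠ G.sink, η x ∈ Set.Ico (G.degIn (signalsAfter ν T x) x)
    (G.degIn (signalsAfter ν T x) x + G.degIn (signalsAt ν T x) x)

namespace IsBurningTime

theorem lt_degIn (hT : IsBurningTime G ν η T) (hx : x ≠ G.sink) :
    η x < G.degIn {y | T x ≤ ν x (T y)} x :=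
  (hT.mem_Ico x hx).2.trans_eq degIn_signalsAfter_add_degIn_signalsAt

theorem le_of_forall_lt (hν : ∀ x t, t < ν x t) (hT : IsBurningTime G ν η T)
    (hT' : IsBurningTime G ν η T') (h : ∀ y, T y < T x → T' y = T y) : T' x ≤ T x := by
  by_cases hx : x = G.sink
  · rw [hx, hT'.sink]
    exact Nat.zero_le _
  by_contra! hlt
  have hsub : ({y | T' x ≤ ν x (T' y)} : Finset α) ⊆ signalsAfter ν T x := by
    intro y hy
    simp only [signalsAfter, Finset.mem_filter_univ] at hy ⊢
    rcases lt_or_ge (T y) (T x) with hyx | hxy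
    · exact hlt.trans_le (h y hyx ▸ hy)
    · exact hxy.trans_lt (hν x (T y))
  exact ((hT'.lt_degIn hx).trans_le (degIn_mono hsub x)).not_ge (hT.mem_Ico x hx).1

theorem unique (hν : ∀ x t, t < ν x t) (hT : IsBurningTime G ν η T)
    (hT' : IsBurningTime G ν η T') : T = T' := by
  suffices ∀ n x, T x = n ↔ T' x = n from funext fun x => ((this (T x) x).1 rfl).symm
  intro n
  induction n using Nat.strong_induction_on with
  | _ n ih =>
    refine fun x => ⟨fun hx => ?_, fun hx => ?_⟩
    · have hle : T' x ≤ T x := le_of_forall_lt hν hT hT' fun y hy => (ih _ (hx ▸ hy) y).1 rfl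
      exact (hle.trans_eq hx).antisymm (not_lt.1 fun hlt => hlt.ne ((ih _ hlt x).2 rfl ▸ hx))
    · have hle : T x ≤ T' x := le_of_forall_lt hν hT' hT fun y hy => (ih _ (hx ▸ hy) y).2 rfl
      exact (hle.trans_eq hx).antisymm (not_lt.1 fun hlt => hlt.ne ((ih _ hlt x).1 rfl ▸ hx))

theorem recurrent [DecidableEq α] (hν : ∀ x t, t < ν x t) (hT : IsBurningTime G ν η T) :
    G.Recurrent η := by
  refine ⟨fun x hx => ?_, fun F hF hne => ?_⟩
  · exact (hT.lt_degIn (Finset.ne_of_mem_erase hx)).trans_le (degIn_mono (Finset.subset_univ _) x)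
  · obtain ⟨x, hx, hmin⟩ := F.exists_min_image T hne
    have hsub : F ⊆ signalsAfter ν T x := fun y hy =>
      Finset.mem_filter_univ y |>.2 ((hmin y hy).trans_lt (hν x (T y)))
    exact ⟨x, hx, (degIn_mono hsub x).trans (hT.mem_Ico x (Finset.ne_of_mem_erase (hF hx))).1⟩

end IsBurningTime

end BurningTime

section IgnitionTree

variable {α : Type*} {G : Graph α} {x : α} {S : Finset α}

/-- The edges joining `x` to a vertex of `S`, oriented away from `x`. -/
def edgesTo (G : Graph α) (x : α) (S : Finset α) : Set G.OEdge := {e | e.1.1 = x ∧ e.1.2.1 ∈ S}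

theorem edgesTo_eq_image : G.edgesTo x S =
    (fun p : Σ y, Fin (G.b x y) => (⟨(x, p.1, p.2), p.2.2⟩ : G.OEdge)) ''
      ((S.sigma fun _ => Finset.univ : Finset (Σ y, Fin (G.b x y))) : Set _) := by
  ext ⟨⟨u, v, k⟩, hk⟩
  simp only [edgesTo, Set.mem_ofPred_eq, Set.mem_image, Finset.mem_coe, Finset.mem_sigma,
    Finset.mem_univ, and_true]
  constructor
  · rintro ⟨rfl, hv⟩
    exact ⟨⟨v, k, hk⟩, hv, rfl⟩
  · rintro ⟨⟨y, i⟩, hy, heq⟩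
    cases heq
    exact ⟨rfl, hy⟩

theorem finite_edgesTo : (G.edgesTo x S).Finite :=
  edgesTo_eq_image ▸ (Finset.finite_toSet _).image _

theorem ncard_edgesTo : (G.edgesTo x S).ncard = G.degIn S x := by
  rw [edgesTo_eq_image, Set.ncard_image_of_injective, Set.ncard_coe_finset, Finset.card_sigma]
  · simp only [Finset.card_univ, Fintype.card_fin, degIn]
  · rintro ⟨y, i⟩ ⟨y', i'⟩ h
    simp only [Subtype.mk.injEq, Prod.mk.injEq, true_and] at h
    obtain ⟨rfl, h⟩ := h
    rw [Fin.ext h]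

variable [Fintype α] {lt : α → G.OEdge → G.OEdge → Prop} {ν : α → ℕ → ℕ} {η η' T T' : α → ℕ}
  {A : Set G.OEdge} {e : G.OEdge}

/-- The number of edges at `x` preceding `e` when these are sorted by the arrival times of their
signals, later signals first, and then by `<_x`, for an edge `e` whose signal arrives when `x`
burns. -/
noncomputable def ignitionRank (lt : α → G.OEdge → G.OEdge → Prop) (ν : α → ℕ → ℕ) (T : α → ℕ)
    (x : α) (e : G.OEdge) : ℕ :=
  G.degIn (signalsAfter ν T x) x + {f ∈ G.edgesTo x (signalsAt ν T x) | lt x f e}.ncard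

theorem bijOn_ignitionRank (hlt : IsStrictTotalOrderOn (lt x) {e | e.1.1 = x}) :
    Set.BijOn (ignitionRank lt ν T x) (G.edgesTo x (signalsAt ν T x))
      (Set.Ico (G.degIn (signalsAfter ν T x) x)
        (G.degIn (signalsAfter ν T x) x + G.degIn (signalsAt ν T x) x)) := by
  have hrank := (hlt.mono fun _ he => he.1).bijOn_ncard (finite_edgesTo (S := signalsAt ν T x))
  rw [ncard_edgesTo] at hrank
  refine Set.BijOn.comp (t := Set.Iio _) (g := (G.degIn (signalsAfter ν T x) x + ·)) ?_ hrank
  refine ⟨fun n hn => ⟨Nat.le_add_right _ _, Nat.add_lt_add_left hn _⟩,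
    (add_right_injective _).injOn, fun n hn => ⟨n - G.degIn (signalsAfter ν T x) x, ?_, ?_⟩⟩
  · exact Nat.sub_lt_left_of_lt_add hn.1 hn.2
  · exact Nat.add_sub_cancel' hn.1

/-- The edges along which the vertices ignite: `e` is the edge of its tail `x` with `η x` edges
preceding it in the sense of `ignitionRank`. -/
def ignitionTree (lt : α → G.OEdge → G.OEdge → Prop) (ν : α → ℕ → ℕ) (η T : α → ℕ) :
    Set G.OEdge :=
  {e | e.1.1 ≠ G.sink ∧ e.1.2.1 ∈ signalsAt ν T e.1.1 ∧ ignitionRank lt ν T e.1.1 e = η e.1.1}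

theorem eq_of_mem_ignitionTree (he : e ∈ ignitionTree lt ν η T) :
    T e.1.1 = ν e.1.1 (T e.1.2.1) :=
  ((Finset.mem_filter_univ _).1 he.2.1).symm

theorem lt_of_mem_ignitionTree (hν : ∀ x t, t < ν x t) (he : e ∈ ignitionTree lt ν η T) :
    T e.1.2.1 < T e.1.1 :=
  eq_of_mem_ignitionTree he ▸ hν _ _

theorem IsBurningTime.isArborescence_ignitionTree (hν : ∀ x t, t < ν x t)
    (hlt : ∀ x, IsStrictTotalOrderOn (lt x) {e | e.1.1 = x}) (hT : IsBurningTime G ν η T) :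
    IsArborescence (ignitionTree lt ν η T) where
  bijOn_tail := by
    refine ⟨fun e he => he.1, fun e he f hf hef => ?_, fun x hx => ?_⟩
    · obtain ⟨-, he_at, he_rank⟩ := he
      obtain ⟨-, hf_at, hf_rank⟩ := hf
      replace hef : e.1.1 = f.1.1 := hef
      rw [hef] at he_at he_rank
      exact (bijOn_ignitionRank (hlt _)).injOn ⟨hef, he_at⟩ ⟨rfl, hf_at⟩
        (he_rank.trans hf_rank.symm)
    · obtain ⟨e, ⟨rfl, he⟩, hrank⟩ := (bijOn_ignitionRank (hlt x)).surjOn (hT.mem_Ico x hx)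
      exact ⟨e, ⟨hx, he, hrank⟩, rfl⟩
  exists_rank := ⟨T, fun _ => lt_of_mem_ignitionTree hν⟩

theorem IsBurningTime.eq_of_ignitionTree_eq (hν : ∀ x t, t < ν x t)
    (hlt : ∀ x, IsStrictTotalOrderOn (lt x) {e | e.1.1 = x}) (hT : IsBurningTime G ν η T)
    (hT' : IsBurningTime G ν η' T') (h : ignitionTree lt ν η T = ignitionTree lt ν η' T')
    (hx : x ≠ G.sink) : η x = η' x := by
  have hA := hT.isArborescence_ignitionTree hν hlt
  obtain rfl : T = T' := hA.time_unique (hT.sink.trans hT'.sink.symm)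
    (fun _ => eq_of_mem_ignitionTree) (fun _ he => eq_of_mem_ignitionTree (h ▸ he))
  obtain ⟨e, he, rfl⟩ := hA.exists_tail_eq hx
  have he' : e ∈ ignitionTree lt ν η' T := h ▸ he
  exact he.2.2.symm.trans he'.2.2

theorem IsArborescence.exists_ignitionTree_eq (hν : ∀ x t, t < ν x t)
    (hlt : ∀ x, IsStrictTotalOrderOn (lt x) {e | e.1.1 = x}) (hA : IsArborescence A) :
    ∃ η T, η G.sink = 0 ∧ IsBurningTime G ν η T ∧ ignitionTree lt ν η T = A := by
  obtain ⟨T, hsink, hT⟩ := hA.exists_time ν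
  have mem_signalsAt {e : G.OEdge} (he : e ∈ A) : e.1.2.1 ∈ signalsAt ν T e.1.1 :=
    (Finset.mem_filter_univ _).2 (hT e he).symm
  choose parent parent_mem parent_tail using fun x => hA.exists_tail_eq (x := x)
  let η (x : α) : ℕ := if hx : x = G.sink then 0 else ignitionRank lt ν T x (parent x hx)
  have η_tail {e : G.OEdge} (he : e ∈ A) : ignitionRank lt ν T e.1.1 e = η e.1.1 := by
    have hx := hA.tail_ne_sink he
    simp only [η, dif_neg hx, hA.eq_of_tail_eq (parent_mem _ hx) he (parent_tail _ hx)]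
  have hη : IsBurningTime G ν η T := by
    refine ⟨hsink, fun x hx => ?_⟩
    obtain ⟨e, he, rfl⟩ := hA.exists_tail_eq hx
    exact η_tail he ▸ (bijOn_ignitionRank (hlt _)).mapsTo ⟨rfl, mem_signalsAt he⟩
  refine ⟨η, T, dif_pos rfl, hη, ?_⟩
  exact (hA.eq_of_subset (hη.isArborescence_ignitionTree hν hlt)
    fun e he => ⟨hA.tail_ne_sink he, mem_signalsAt he, η_tail he⟩).symm

end IgnitionTree

section Burning

variable {α : Type*} {x : α} {i j n : ℕ}

theorem lt_sInf_notMem_iff {f : ℕ → Finset α} (hf : Antitone f) (hx : x ∉ f n) :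
    i < sInf {i | x ∉ f i} ↔ x ∈ f i := by
  refine ⟨fun hi => not_not.1 (Nat.notMem_of_lt_sInf hi), fun hi => ?_⟩
  by_contra! hle
  have hsInf : x ∉ f (sInf {i | x ∉ f i}) := Nat.sInf_mem (s := {i | x ∉ f i}) ⟨n, hx⟩
  exact hsInf (hf hle hi)

variable [Fintype α]

theorem eq_succ_card_of_antitone {f : ℕ → Finset α} (hf : Antitone f)
    (hstep : ∀ m, f (m + 1) = f m → f (m + 2) = f (m + 1)) :
    f (Fintype.card α + 1) = f (Fintype.card α) := by
  have eq_of_card_eq {m : ℕ} (h : (f m)ᶜ.card = (f (m + 1))ᶜ.card) : f (m + 1) = f m :=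
    (compl_injective (Finset.eq_of_subset_of_card_le
      (Finset.compl_subset_compl.2 (hf m.le_succ)) h.ge)).symm
  refine eq_of_card_eq (Nat.stabilises_of_monotone (f := fun m => (f m)ᶜ.card) ?_
    (fun m => Finset.card_le_univ _) ?_ (Fintype.card α).le_succ).symm
  · exact fun m n hmn => Finset.card_le_card (Finset.compl_subset_compl.2 (hf hmn))
  · exact fun m h => by simp only [hstep m (eq_of_card_eq h)]

variable [DecidableEq α] {G : Graph α} {η : α → ℕ} {Q : Finset α}

theorem U1_antitone : Antitone (G.U1 η Q) :=
  antitone_nat_of_succ_le fun _ => Finset.filter_subset _ _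

theorem U2_antitone : Antitone (G.U2 η Q) :=
  antitone_nat_of_succ_le fun _ => Finset.filter_subset _ _

theorem mem_U1_succ :
    x ∈ G.U1 η Q (i + 1) ↔ x ∈ G.U1 η Q i ∧ (x ∈ Q ∨ η x < G.degIn (G.U1 η Q i) x) :=
  Finset.mem_filter

theorem mem_U2_succ :
    x ∈ G.U2 η Q (i + 1) ↔ x ∈ G.U2 η Q i ∧ η x < G.degIn (G.U2 η Q i) x :=
  Finset.mem_filter

theorem U1_succ_card : G.U1 η Q (Fintype.card α + 1) = G.U1lim η Q :=
  eq_succ_card_of_antitone U1_antitone fun m h => by rw [U1, h, ← U1, h]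

theorem U2_succ_card : G.U2 η Q (Fintype.card α + 1) = G.U2 η Q (Fintype.card α) :=
  eq_succ_card_of_antitone U2_antitone fun m h => by rw [U2, h, ← U2, h]

theorem Recurrent.U2_card_eq_empty (hη : G.Recurrent η) :
    G.U2 η Q (Fintype.card α) = ∅ := by
  have hsub : G.U2 η Q (Fintype.card α) ⊆ G.VSet :=
    (U2_antitone (Nat.zero_le _)).trans (U1_antitone (Nat.zero_le (Fintype.card α)))
  by_contra hne
  obtain ⟨x, hx, hle⟩ := hη.2 _ hsub (Finset.nonempty_iff_ne_empty.2 hne)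
  rw [← U2_succ_card, mem_U2_succ] at hx
  exact hx.2.not_ge hle

theorem mem_U1_iff_lt_burnOrder (hi : i ≤ Fintype.card α) :
    x ∈ G.U1 η Q i ↔ i < G.burnOrder η Q x := by
  by_cases hx : x ∈ G.U1lim η Q
  · rw [burnOrder, if_pos hx]
    exact iff_of_true (U1_antitone hi hx) (by omega)
  · rw [burnOrder, if_neg hx, p1time, lt_sInf_notMem_iff U1_antitone hx]

theorem mem_U1lim_iff : x ∈ G.U1lim η Q ↔ Fintype.card α < G.burnOrder η Q x :=
  mem_U1_iff_lt_burnOrder le_rfl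

theorem mem_U2_iff_lt_burnOrder (hη : G.Recurrent η) :
    x ∈ G.U2 η Q j ↔ Fintype.card α + 1 + j < G.burnOrder η Q x := by
  by_cases hx : x ∈ G.U1lim η Q
  · have hempty : x ∉ G.U2 η Q (Fintype.card α) := by simp [hη.U2_card_eq_empty]
    rw [burnOrder, if_pos hx, p2time, Nat.add_lt_add_iff_left,
      lt_sInf_notMem_iff U2_antitone hempty]
  · have hle := mem_U1lim_iff.not.1 hx
    exact iff_of_false (fun hj => hx (U2_antitone (Nat.zero_le j) hj)) (by omega)

theorem burnOrder_eq_zero_iff : G.burnOrder η Q x = 0 ↔ x = G.sink := by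
  have h := mem_U1_iff_lt_burnOrder (G := G) (η := η) (Q := Q) (x := x) (Nat.zero_le _)
  rw [← Nat.le_zero, ← not_lt, ← h]
  simp [U1, VSet]

theorem burnOrder_ne_succ_card (hη : G.Recurrent η) :
    G.burnOrder η Q x ≠ Fintype.card α + 1 := by
  intro hx
  have hmem : x ∈ G.U2 η Q 0 := mem_U1lim_iff.2 (by omega)
  exact ((mem_U2_iff_lt_burnOrder hη).1 hmem).ne' hx

theorem exists_burning_step (hη : G.Recurrent η) (hx : x ≠ G.sink) :
    (∃ i < Fintype.card α, G.burnOrder η Q x = i + 1 ∧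
      G.prevBurnt η Q x = G.B1 η Q i ∧ G.burntBefore η Q x = Finset.univ \ G.U1 η Q i) ∨
    ∃ j, G.burnOrder η Q x = Fintype.card α + 2 + j ∧
      G.prevBurnt η Q x = G.B2 η Q j ∧ G.burntBefore η Q x = Finset.univ \ G.U2 η Q j := by
  have hpos : G.burnOrder η Q x ≠ 0 := burnOrder_eq_zero_iff.not.2 hx
  have hne : G.burnOrder η Q x ≠ Fintype.card α + 1 := burnOrder_ne_succ_card hη
  by_cases hlim : x ∈ G.U1lim η Q
  · have hlt := mem_U1lim_iff.1 hlim
    have htime : G.burnOrder η Q x = Fintype.card α + 1 + G.p2time η Q x := if_pos hlim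
    rw [prevBurnt, burntBefore, if_pos hlim, if_pos hlim]
    exact .inr ⟨G.p2time η Q x - 1, by omega, rfl, rfl⟩
  · have hle := mem_U1lim_iff.not.1 hlim
    have htime : G.burnOrder η Q x = G.p1time η Q x := if_neg hlim
    rw [prevBurnt, burntBefore, if_neg hlim, if_neg hlim]
    exact .inl ⟨G.p1time η Q x - 1, by omega, by omega, rfl, rfl⟩

/-- The arrival time at `x` of a signal sent at time `t` in the burning based on `Q`, on the time
scale of `burnOrder`: one step later, except that for `x ∈ Q` the signals sent during phase one all
arrive at the first step of phase two. That step has number `card α + 2`, since `burnOrder` counts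
phase-two steps from `card α + 1`. -/
def nextTime (Q : Finset α) (x : α) (t : ℕ) : ℕ :=
  if x ∈ Q ∧ t ≤ Fintype.card α then Fintype.card α + 2 else t + 1

theorem lt_nextTime (x : α) (t : ℕ) : t < nextTime Q x t := by
  unfold nextTime
  split_ifs <;> omega

theorem notMem_and_degIn_U1_le (hi : i < Fintype.card α) (hx : G.burnOrder η Q x = i + 1) :
    x ∉ Q ∧ G.degIn (G.U1 η Q i) x ≤ η x := by
  have hmem : x ∈ G.U1 η Q i := (mem_U1_iff_lt_burnOrder hi.le).2 (by omega)
  have hnot : x ∉ G.U1 η Q (i + 1) := (mem_U1_iff_lt_burnOrder hi).not.2 (by omega)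
  simpa only [mem_U1_succ, hmem, true_and, not_or, not_lt] using hnot

theorem signalsAfter_eq_U1 (hi : i < Fintype.card α) (hx : G.burnOrder η Q x = i + 1) :
    signalsAfter (nextTime Q) (G.burnOrder η Q) x = G.U1 η Q i := by
  obtain ⟨hQ, -⟩ := notMem_and_degIn_U1_le hi hx
  ext y
  simp only [signalsAfter, nextTime, hQ, false_and, if_false, Finset.mem_filter_univ, hx,
    mem_U1_iff_lt_burnOrder hi.le, Nat.add_lt_add_iff_right]

theorem signalsAt_eq_B1 (hi : i < Fintype.card α) (hx : G.burnOrder η Q x = i + 1) :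
    signalsAt (nextTime Q) (G.burnOrder η Q) x = G.B1 η Q i := by
  obtain ⟨hQ, -⟩ := notMem_and_degIn_U1_le hi hx
  ext y
  simp only [signalsAt, nextTime, hQ, false_and, if_false, Finset.mem_filter_univ, hx,
    Nat.add_right_cancel_iff]
  cases i with
  | zero => rw [burnOrder_eq_zero_iff, B1, Finset.mem_singleton]
  | succ k =>
    rw [B1, Finset.mem_sdiff, mem_U1_iff_lt_burnOrder (by omega), mem_U1_iff_lt_burnOrder hi.le]
    omega

theorem lt_degIn_U1_add_degIn_B1 (hη : G.Stable η) (hi : i < Fintype.card α)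
    (hx : G.burnOrder η Q x = i + 1) :
    η x < G.degIn (G.U1 η Q i) x + G.degIn (G.B1 η Q i) x := by
  have hsink : x ≠ G.sink := burnOrder_eq_zero_iff.not.1 (hx.trans_ne i.succ_ne_zero)
  cases i with
  | zero =>
    refine (hη x (Finset.mem_erase.2 ⟨hsink, Finset.mem_univ x⟩)).trans_eq ?_
    simp only [deg, degIn, U1, B1, VSet, Finset.sum_singleton, Finset.mem_univ,
      Finset.sum_erase_add]
  | succ k =>
    have hmem : x ∈ G.U1 η Q (k + 1) := (mem_U1_iff_lt_burnOrder hi.le).2 (by omega)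
    obtain ⟨hQ, -⟩ := notMem_and_degIn_U1_le hi hx
    rw [B1, add_comm, degIn_sdiff_add_degIn (U1_antitone k.le_succ)]
    exact (mem_U1_succ.1 hmem).2.resolve_left hQ

theorem degIn_U2_le (hη : G.Recurrent η) (hx : G.burnOrder η Q x = Fintype.card α + 2 + j) :
    G.degIn (G.U2 η Q j) x ≤ η x := by
  have hmem : x ∈ G.U2 η Q j := (mem_U2_iff_lt_burnOrder hη).2 (by omega)
  have hnot : x ∉ G.U2 η Q (j + 1) := (mem_U2_iff_lt_burnOrder hη).not.2 (by omega)
  simpa only [mem_U2_succ, hmem, true_and, not_lt] using hnot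

theorem mem_of_burnOrder_eq_card_add_two (hη : G.Recurrent η)
    (hx : G.burnOrder η Q x = Fintype.card α + 2) : x ∈ Q := by
  have hmem : x ∈ G.U1 η Q (Fintype.card α + 1) := by
    rw [U1_succ_card, mem_U1lim_iff]
    omega
  exact (mem_U1_succ.1 hmem).2.resolve_right (degIn_U2_le (j := 0) hη hx).not_gt

theorem lt_degIn_U2_add_degIn_B2 (hη : G.Recurrent η)
    (hx : G.burnOrder η Q x = Fintype.card α + 2 + j) :
    η x < G.degIn (G.U2 η Q j) x + G.degIn (G.B2 η Q j) x := by
  have hsink : x ≠ G.sink := burnOrder_eq_zero_iff.not.1 (hx.trans_ne (by omega))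
  cases j with
  | zero =>
    rw [B2, add_comm, U2, degIn_sdiff_add_degIn (Finset.subset_univ _)]
    exact hη.1 x (Finset.mem_erase.2 ⟨hsink, Finset.mem_univ x⟩)
  | succ k =>
    have hmem : x ∈ G.U2 η Q (k + 1) := (mem_U2_iff_lt_burnOrder hη).2 (by omega)
    rw [B2, add_comm, degIn_sdiff_add_degIn (U2_antitone k.le_succ)]
    exact (mem_U2_succ.1 hmem).2

theorem signalsAfter_eq_U2 (hη : G.Recurrent η)
    (hx : G.burnOrder η Q x = Fintype.card α + 2 + j) :
    signalsAfter (nextTime Q) (G.burnOrder η Q) x = G.U2 η Q j := by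
  ext y
  have : j = 0 → x ∈ Q := by
    rintro rfl
    exact mem_of_burnOrder_eq_card_add_two hη hx
  have : G.burnOrder η Q y ≠ Fintype.card α + 1 := burnOrder_ne_succ_card hη
  rw [signalsAfter, Finset.mem_filter_univ, mem_U2_iff_lt_burnOrder hη, hx, nextTime]
  grind

theorem signalsAt_eq_B2 (hη : G.Recurrent η)
    (hx : G.burnOrder η Q x = Fintype.card α + 2 + j) :
    signalsAt (nextTime Q) (G.burnOrder η Q) x = G.B2 η Q j := by
  ext y
  have : j = 0 → x ∈ Q := by
    rintro rfl
    exact mem_of_burnOrder_eq_card_add_two hη hx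
  have : G.burnOrder η Q y ≠ Fintype.card α + 1 := burnOrder_ne_succ_card hη
  rw [signalsAt, Finset.mem_filter_univ, hx, nextTime]
  cases j with
  | zero =>
    rw [B2, Finset.mem_sdiff, mem_U1lim_iff]
    grind
  | succ k =>
    rw [B2, Finset.mem_sdiff, mem_U2_iff_lt_burnOrder hη, mem_U2_iff_lt_burnOrder hη]
    grind

theorem isBurningTime_burnOrder (hη : G.Recurrent η) :
    IsBurningTime G (nextTime Q) η (G.burnOrder η Q) := by
  refine ⟨burnOrder_eq_zero_iff.2 rfl, fun x hx => ?_⟩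
  rcases exists_burning_step hη hx (Q := Q) with ⟨i, hi, hxi, -⟩ | ⟨j, hxj, -⟩
  · rw [signalsAfter_eq_U1 hi hxi, signalsAt_eq_B1 hi hxi]
    exact ⟨(notMem_and_degIn_U1_le hi hxi).2, lt_degIn_U1_add_degIn_B1 hη.1 hi hxi⟩
  · rw [signalsAfter_eq_U2 hη hxj, signalsAt_eq_B2 hη hxj]
    exact ⟨degIn_U2_le hη hxj, lt_degIn_U2_add_degIn_B2 hη hxj⟩

theorem prevBurnt_eq_signalsAt (hη : G.Recurrent η) (hx : x ≠ G.sink) :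
    G.prevBurnt η Q x = signalsAt (nextTime Q) (G.burnOrder η Q) x := by
  rcases exists_burning_step hη hx (Q := Q) with ⟨i, hi, hxi, hprev, -⟩ | ⟨j, hxj, hprev, -⟩
  · rw [hprev, signalsAt_eq_B1 hi hxi]
  · rw [hprev, signalsAt_eq_B2 hη hxj]

theorem burntBefore_eq_sdiff_signalsAfter (hη : G.Recurrent η) (hx : x ≠ G.sink) :
    G.burntBefore η Q x =
      Finset.univ \ signalsAfter (nextTime Q) (G.burnOrder η Q) x := by
  rcases exists_burning_step hη hx (Q := Q) with ⟨i, hi, hxi, -, hbefore⟩ | ⟨j, hxj, -, hbefore⟩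
  · rw [hbefore, signalsAfter_eq_U1 hi hxi]
  · rw [hbefore, signalsAfter_eq_U2 hη hxj]

theorem degIn_signalsAfter_add_jX (hη : G.Recurrent η) (hx : x ≠ G.sink) :
    G.degIn (signalsAfter (nextTime Q) (G.burnOrder η Q) x) x + G.jX η Q x = η x := by
  have hdeg : G.degIn (G.burntBefore η Q x) x +
      G.degIn (signalsAfter (nextTime Q) (G.burnOrder η Q) x) x = G.deg x := by
    rw [burntBefore_eq_sdiff_signalsAfter hη hx]
    exact degIn_sdiff_add_degIn (Finset.subset_univ _)
  have hle := ((isBurningTime_burnOrder hη (Q := Q)).mem_Ico x hx).1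
  rw [jX]
  omega

variable {lt : α → G.OEdge → G.OEdge → Prop}

theorem edgeSpec_iff (hη : G.Recurrent η) (hx : x ≠ G.sink) {e : G.OEdge} :
    G.EdgeSpec lt η Q x e ↔ e ∈ G.edgesTo x (signalsAt (nextTime Q) (G.burnOrder η Q) x) ∧
      ignitionRank lt (nextTime Q) (G.burnOrder η Q) x e = η x := by
  rw [EdgeSpec, prevBurnt_eq_signalsAt hη hx, ← degIn_signalsAfter_add_jX hη hx (Q := Q),
    ignitionRank, Nat.add_left_cancel_iff]
  simp only [edgesTo, Set.mem_ofPred_eq, and_assoc]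

theorem treeOf_eq_ignitionTree (hη : G.Recurrent η) :
    G.treeOf lt η Q = ignitionTree lt (nextTime Q) η (G.burnOrder η Q) := by
  ext e
  constructor
  · rintro ⟨x, hx, he⟩
    have hsink : x ≠ G.sink := Finset.ne_of_mem_erase hx
    obtain ⟨⟨rfl, he⟩, hrank⟩ := (edgeSpec_iff hη hsink).1 he
    exact ⟨hsink, he, hrank⟩
  · rintro ⟨hsink, he, hrank⟩
    exact ⟨e.1.1, Finset.mem_erase.2 ⟨hsink, Finset.mem_univ _⟩,
      (edgeSpec_iff hη hsink).2 ⟨⟨rfl, he⟩, hrank⟩⟩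

theorem burnOrder_lt_of_mem_treeOf (hη : G.Recurrent η) {e : G.OEdge}
    (he : e ∈ G.treeOf lt η Q) : G.burnOrder η Q e.1.2.1 < G.burnOrder η Q e.1.1 :=
  lt_of_mem_ignitionTree lt_nextTime (treeOf_eq_ignitionTree hη ▸ he)

theorem bijOn_treeOf (hlt : ∀ x, IsStrictTotalOrderOn (lt x) {e | e.1.1 = x}) :
    Set.BijOn (fun η => G.treeOf lt η Q) {η : α → ℕ | η G.sink = 0 ∧ G.Recurrent η}
      {A | IsArborescence A} := by
  refine ⟨fun η ⟨_, hη⟩ => ?_, fun η ⟨hsink, hη⟩ η' ⟨hsink', hη'⟩ h => ?_, fun A hA => ?_⟩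
  · have hA := (isBurningTime_burnOrder hη (Q := Q)).isArborescence_ignitionTree lt_nextTime hlt
    rwa [← treeOf_eq_ignitionTree hη] at hA
  · ext x
    by_cases hx : x = G.sink
    · rw [hx, hsink, hsink']
    · exact (isBurningTime_burnOrder hη).eq_of_ignitionTree_eq lt_nextTime hlt
        (isBurningTime_burnOrder hη')
        ((treeOf_eq_ignitionTree hη).symm.trans (h.trans (treeOf_eq_ignitionTree hη'))) hx
  · obtain ⟨η, T, hsink, hT, rfl⟩ :=
      IsArborescence.exists_ignitionTree_eq (lt_nextTime (Q := Q)) hlt hA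
    have hη : G.Recurrent η := hT.recurrent lt_nextTime
    refine ⟨η, ⟨hsink, hη⟩, (treeOf_eq_ignitionTree hη).trans ?_⟩
    rw [(isBurningTime_burnOrder hη).unique lt_nextTime hT]

end Burning

end Graph

end Sandpile

open Sandpile.Graph in
theorem statement_16_general {α : Type*} [Fintype α] [DecidableEq α] {G : Sandpile.Graph α}
    (hb : ∀ x y, G.b x y = G.b y x) (Q : Finset α) {lt : α → G.OEdge → G.OEdge → Prop}
    (hlt : ∀ x, Sandpile.IsStrictTotalOrderOn (lt x) {e | e.1.1 = x}) :
    Set.BijOn (fun η => G.undir '' G.treeOf lt η Q)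
        {η : α → ℕ | η G.sink = 0 ∧ G.Recurrent η}
        {t : Set (Sym2 α × ℕ) | G.IsSpanningTreeSet t} ∧
      ∀ η : α → ℕ, G.Recurrent η → ∀ e ∈ G.treeOf lt η Q,
        G.burnOrder η Q e.1.2.1 < G.burnOrder η Q e.1.1 :=
  ⟨(bijOn_undir_image hb).comp (bijOn_treeOf hlt),
    fun _ hη _ he => burnOrder_lt_of_mem_treeOf hη he⟩

/-- The burning bijection based on `Q` (with respect to any choice
of strict total orders `<_x` on the edges incident to each `x ∈ V`) is a bijection
from `R_G` onto the set of spanning trees of `G`; moreover each tree edge `e_x` joins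
`x` to a vertex burnt strictly before `x`. -/
theorem statement_16 {α : Type*} [Fintype α] [DecidableEq α] (G : Sandpile.Graph α)
    (hG : G.IsSandpileGraph) (Q : Finset α) (hQ : Q ⊆ G.VSet)
    (lt : α → G.OEdge → G.OEdge → Prop)
    (hirr : ∀ x : α, ∀ e : G.OEdge, ¬ lt x e e)
    (htrans : ∀ x : α, ∀ e f g : G.OEdge, lt x e f → lt x f g → lt x e g)
    (htri : ∀ x : α, ∀ e f : G.OEdge, e.1.1 = x → f.1.1 = x →
      e = f ∨ lt x e f ∨ lt x f e) :
    Set.BijOn (fun η => G.undir '' G.treeOf lt η Q)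
        {η : α → ℕ | η G.sink = 0 ∧ G.Recurrent η}
        {t : Set (Sym2 α × ℕ) | G.IsSpanningTreeSet t} ∧
      ∀ η : α → ℕ, G.Recurrent η → ∀ e ∈ G.treeOf lt η Q,
        G.burnOrder η Q e.1.2.1 < G.burnOrder η Q e.1.1 := 
  statement_16_general hG.1 Q fun x =>
    ⟨fun e _ => hirr x e, fun e _ f _ g _ => htrans x e f g, fun e he f hf => htri x e f he hf⟩
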